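/- arXiv:2306.14625 — 2 statements merged into one kernel-verified Lean document; each statement's English description precedes it below -/
import Mathlib

section
/- (Ihara–Bass determinant identity) Let G be a finite simple connected graph with n vertices and m edges, let B be its non-backtracking edge matrix, A its adjacency matrix, and D its degree diagonal matrix. Then for every u ∈ ℂ, (1 − u²)^n · det(I_{2m} − u·B) = (1 − u²)^m · det(I_n − u·A + u²·(D − I_n)). -/
/-!
Let `S` be the dart-by-vertex incidence matrix of origins and `J` the matrix of dart reversal, so
that `Sᵀ * S = D`, `Sᵀ * J * S = A`, `J * J = 1` and `B = S * (Sᵀ * J) - J`. Then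
`1 - u • B = (1 + u • J) - (u • S) * (Sᵀ * J)` is a perturbation of `1 + u • J` factoring through
the vertices. As `(1 + u • J) * (1 - u • J) = (1 - u ^ 2) • 1`, the matrix determinant lemma, with
the inverse of `1 + u • J` replaced by this quasi-inverse so that nothing has to be invertible,
turns the determinant over darts into one over vertices. The remaining factor `det (1 + u • J)` is
a product of one `2 × 2` determinant `1 - u ^ 2` for each edge.
-/

open Matrix SimpleGraph

/-- The non-backtracking edge matrix of a finite simple graph `G`, indexed by the arcs
(darts) of `G`: `B e f = 1` if `t f = o e` and `f ≠ e⁻¹`, and `B e f = 0` otherwise. -/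
def nonBacktrackingMatrix {V : Type*} [Fintype V] [DecidableEq V]
    (G : SimpleGraph V) [DecidableRel G.Adj] : Matrix G.Dart G.Dart ℂ :=
  fun e f => if f.toProd.2 = e.toProd.1 ∧ f ≠ e.symm then 1 else 0

section Matrices

variable {ι κ R : Type*} [Fintype ι] [DecidableEq ι] [Fintype κ] [DecidableEq κ]

theorem permMatrix_mul_self_of_involutive [NonAssocSemiring R] {σ : Equiv.Perm ι}
    (hσ : Function.Involutive σ) : σ.permMatrix R * σ.permMatrix R = 1 := by
  have σ_mul_self : σ * σ = 1 := Equiv.ext hσ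
  rw [← permMatrix_mul, σ_mul_self, permMatrix_one]

variable [CommRing R]

theorem pow_card_mul_det_sub_mul_of_mul_eq_smul_one {P Q : Matrix ι ι R} {c : R}
    (hPQ : P * Q = c • 1) (X : Matrix ι κ R) (Y : Matrix κ ι R) :
    c ^ Fintype.card κ * (P - X * Y).det = P.det * (c • 1 - Y * Q * X).det := by
  have block_elimination : fromBlocks 1 Y X P * fromBlocks (c • 1) 0 (-(Q * X)) 1 =
      fromBlocks (c • 1 - Y * Q * X) Y 0 P := by
    have clear_corner : X * (c • (1 : Matrix κ κ R)) + P * -(Q * X) = 0 := by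
      rw [Matrix.mul_neg, ← Matrix.mul_assoc, hPQ, Matrix.mul_smul, Matrix.smul_mul,
        Matrix.mul_one, Matrix.one_mul, add_neg_cancel]
    rw [fromBlocks_multiply, clear_corner]
    simp [sub_eq_add_neg, Matrix.mul_assoc]
  have h := congrArg det block_elimination
  rw [det_mul, det_fromBlocks_one₁₁, det_fromBlocks_zero₁₂, det_fromBlocks_zero₂₁, det_smul,
    det_one, det_one] at h
  linear_combination h

theorem one_add_smul_mul_one_sub_smul_of_mul_self_eq_one {A : Type*} [Ring A] [Algebra R A]
    {a : A} (ha : a * a = 1) (u : R) : (1 + u • a) * (1 - u • a) = (1 - u ^ 2) • 1 := by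
  rw [← (Commute.one_left _).mul_self_sub_mul_self_eq, one_mul, smul_mul_smul_comm, ha, sub_smul,
    one_smul, pow_two]

theorem det_fromBlocks_one_smul_one (u : R) :
    (fromBlocks 1 (u • 1) (u • 1) 1 : Matrix (ι ⊕ ι) (ι ⊕ ι) R).det =
      (1 - u ^ 2) ^ Fintype.card ι := by
  have schur_complement : (1 : Matrix ι ι R) - u • 1 * u • 1 = (1 - u ^ 2) • 1 := by
    rw [smul_mul_smul_comm, Matrix.one_mul, sub_smul, one_smul, pow_two]
  rw [det_fromBlocks_one₁₁, schur_complement, det_smul, det_one, mul_one]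

theorem exists_orientation_of_involutive {α : Type*} {σ : α → α} (hσ : Function.Involutive σ)
    (hfix : ∀ a, σ a ≠ a) : ∃ p : α → Prop, ∀ a, p (σ a) ↔ ¬ p a := by
  classical
  let := linearOrderOfSTO (WellOrderingRel (α := α))
  refine ⟨fun a => a < σ a, fun a => ?_⟩
  simp only [hσ a, not_lt, (hfix a).le_iff_lt]

theorem det_one_add_smul_permMatrix_of_involutive {σ : Equiv.Perm ι}
    (hσ : Function.Involutive σ) (hfix : ∀ i, σ i ≠ i) (u : R) :
    (1 + u • σ.permMatrix R).det = (1 - u ^ 2) ^ (Fintype.card ι / 2) := by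
  classical
  obtain ⟨p, hp⟩ := exists_orientation_of_involutive hσ hfix
  let flip : {i // p i} ≃ {i // ¬ p i} :=
    σ.subtypeEquiv fun i => by rw [hp, not_not]
  let pairing : {i // p i} ⊕ {i // p i} ≃ ι :=
    ((Equiv.refl _).sumCongr flip).trans (Equiv.sumCompl p)
  have card_eq : Fintype.card ι / 2 = Fintype.card {i // p i} := by
    rw [← Fintype.card_congr pairing, Fintype.card_sum]
    lia
  have ne_flip (i j : {i // p i}) : (i : ι) ≠ σ j := fun h => (hp j).1 (h ▸ i.2) j.2
  have block_form : (1 + u • σ.permMatrix R).submatrix pairing pairing =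
      fromBlocks 1 (u • 1) (u • 1) 1 := by
    ext (i | i) (j | j) <;>
      simp [pairing, flip, one_apply, Equiv.toPEquiv_apply, hσ _, ne_flip, (ne_flip _ _).symm,
        Subtype.ext_iff]
  rw [← det_submatrix_equiv_self pairing, block_form, det_fromBlocks_one_smul_one, card_eq]

end Matrices

section Darts

variable {V : Type*} (G : SimpleGraph V)

/-- Reversal of darts, `e ↦ e⁻¹`, as a permutation; its permutation matrix is the `J` of the
Ihara–Bass formula. -/
def dartReversal : Equiv.Perm G.Dart :=
  Dart.symm_involutive.toPerm

variable [DecidableEq V]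

/-- The incidence matrix of darts and their origins: the entry at `(e, v)` is `1` if `o e = v`
and `0` otherwise. It is used to factor the Hashimoto matrix through the vertices. -/
def dartOriginMatrix (R : Type*) [Zero R] [One R] : Matrix G.Dart V R :=
  of fun e v => if e.fst = v then 1 else 0

/-- The Hashimoto (non-backtracking) matrix with entries in an arbitrary `R`, for the Ihara–Bass
identity over commutative rings. As in `nonBacktrackingMatrix`, the column dart is followed by
the row dart. -/
def hashimotoMatrix (R : Type*) [Zero R] [One R] : Matrix G.Dart G.Dart R :=
  of fun e f => if f.snd = e.fst ∧ f ≠ e.symm then 1 else 0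

theorem dartOriginMatrix_apply (R : Type*) [Zero R] [One R] (e : G.Dart) (v : V) :
    dartOriginMatrix G R e v = if e.fst = v then 1 else 0 :=
  rfl

variable [Fintype V] [DecidableRel G.Adj] (R : Type*)

theorem dartOriginMatrix_transpose_mul_self [NonAssocSemiring R] :
    (dartOriginMatrix G R)ᵀ * dartOriginMatrix G R = G.degMatrix R := by
  ext v w
  rw [degMatrix, diagonal_apply, ← dart_fst_fiber_card_eq_degree]
  simp only [mul_apply, transpose_apply, dartOriginMatrix_apply, ite_zero_mul_ite_zero, mul_one]
  split_ifs with hvw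
  · subst hvw
    simp only [and_self, Finset.sum_boole]
  · exact Finset.sum_eq_zero fun e _ => if_neg fun he => hvw (he.1.symm.trans he.2)

theorem dartOriginMatrix_transpose_mul_reversal_apply [NonAssocSemiring R] (v : V) (e : G.Dart) :
    ((dartOriginMatrix G R)ᵀ * (dartReversal G).permMatrix R) v e =
      if e.snd = v then 1 else 0 := by
  rw [PEquiv.mul_toMatrix_toPEquiv]
  rfl

theorem dartOriginMatrix_transpose_mul_reversal_mul_self [NonAssocSemiring R] :
    (dartOriginMatrix G R)ᵀ * (dartReversal G).permMatrix R * dartOriginMatrix G R =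
      G.adjMatrix R := by
  ext v w
  have dart_unique (h : G.Adj v w) (e : G.Dart) :
      e.snd = v ∧ e.fst = w ↔ e = ⟨(w, v), h.symm⟩ := by
    rw [Dart.ext_iff, Prod.ext_iff, and_comm]
  rw [mul_apply, adjMatrix_apply]
  simp only [dartOriginMatrix_transpose_mul_reversal_apply, dartOriginMatrix_apply,
    ite_zero_mul_ite_zero, mul_one]
  split_ifs with hvw
  · simp only [dart_unique hvw, Finset.sum_ite_eq', Finset.mem_univ, if_true]
  · refine Finset.sum_eq_zero fun e _ => if_neg ?_
    rintro ⟨rfl, rfl⟩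
    exact hvw e.adj.symm

theorem hashimotoMatrix_eq_dartOriginMatrix_mul_sub_reversal [NonAssocRing R] :
    hashimotoMatrix G R =
      dartOriginMatrix G R * ((dartOriginMatrix G R)ᵀ * (dartReversal G).permMatrix R) -
        (dartReversal G).permMatrix R := by
  ext e f
  have composable :
      (dartOriginMatrix G R * ((dartOriginMatrix G R)ᵀ * (dartReversal G).permMatrix R)) e f =
        if f.snd = e.fst then 1 else 0 := by
    rw [mul_apply]
    simp only [dartOriginMatrix_transpose_mul_reversal_apply, dartOriginMatrix_apply, ite_mul,
      one_mul, zero_mul, Finset.sum_ite_eq, Finset.mem_univ, if_true]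
  have backtracking : (dartReversal G).permMatrix R e f = if f = e.symm then 1 else 0 := by
    simp [dartReversal, Equiv.toPEquiv_apply, eq_comm]
  rw [Matrix.sub_apply, composable, backtracking, hashimotoMatrix, of_apply]
  by_cases hf : f = e.symm <;> simp [hf]

variable {R} in
theorem det_one_add_smul_reversal [CommRing R] (u : R) :
    (1 + u • (dartReversal G).permMatrix R).det = (1 - u ^ 2) ^ G.edgeFinset.card := by
  rw [det_one_add_smul_permMatrix_of_involutive Dart.symm_involutive Dart.symm_ne,
    G.dart_card_eq_twice_card_edges, Nat.mul_div_cancel_left _ two_pos]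

end Darts

theorem ihara_bass_general {V R : Type*} [Fintype V] [DecidableEq V] [CommRing R]
    (G : SimpleGraph V) [DecidableRel G.Adj] (u : R) :
    (1 - u ^ 2) ^ Fintype.card V * (1 - u • hashimotoMatrix G R).det =
      (1 - u ^ 2) ^ G.edgeFinset.card *
        (1 - u • G.adjMatrix R + u ^ 2 • (G.degMatrix R - 1)).det := by
  let S := dartOriginMatrix G R
  let J := (dartReversal G).permMatrix R
  have J_mul_self : J * J = 1 := permMatrix_mul_self_of_involutive Dart.symm_involutive
  have dart_side : 1 - u • hashimotoMatrix G R = (1 + u • J) - (u • S) * (Sᵀ * J) := by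
    rw [hashimotoMatrix_eq_dartOriginMatrix_mul_sub_reversal, smul_sub, Matrix.smul_mul]
    abel
  have vertex_side : (1 - u ^ 2) • 1 - Sᵀ * J * (1 - u • J) * (u • S) =
      1 - u • G.adjMatrix R + u ^ 2 • (G.degMatrix R - 1) := by
    have absorb_reversal : Sᵀ * J * (1 - u • J) = Sᵀ * J - u • Sᵀ := by
      rw [Matrix.mul_sub, Matrix.mul_one, Matrix.mul_smul, Matrix.mul_assoc, J_mul_self,
        Matrix.mul_one]
    rw [absorb_reversal, Matrix.mul_smul, Matrix.sub_mul, Matrix.smul_mul,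
      dartOriginMatrix_transpose_mul_reversal_mul_self, dartOriginMatrix_transpose_mul_self]
    module
  rw [dart_side, pow_card_mul_det_sub_mul_of_mul_eq_smul_one
    (one_add_smul_mul_one_sub_smul_of_mul_self_eq_one J_mul_self u), vertex_side,
    det_one_add_smul_reversal]

/-- **Ihara–Bass determinant identity.** For a finite simple connected graph
`G` with `n` vertices and `m` edges, for every `u : ℂ`,
`(1 - u²)^n * det(I_{2m} - u • B) = (1 - u²)^m * det(I_n - u • A + u² • (D - I_n))`,
where `B` is the non-backtracking edge matrix, `A` the adjacency matrix and `D` the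
degree diagonal matrix of `G`. -/
theorem ihara_bass {V : Type*} [Fintype V] [DecidableEq V]
    (G : SimpleGraph V) [DecidableRel G.Adj] (hG : G.Connected)
    (n m : ℕ) (hn : n = Fintype.card V) (hm : m = G.edgeFinset.card) :
    ∀ u : ℂ,
      (1 - u ^ 2) ^ n *
          ((1 : Matrix G.Dart G.Dart ℂ) - u • nonBacktrackingMatrix G).det
        = (1 - u ^ 2) ^ m *
            ((1 : Matrix V V ℂ) - u • G.adjMatrix ℂ
              + (u ^ 2) • (Matrix.diagonal (fun v => (G.degree v : ℂ))
                  - (1 : Matrix V V ℂ))).det := by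
  subst hn hm
  exact ihara_bass_general G
end

section
/- Let n ≥ 3, let U_{C_n} be the Grover matrix of the cycle graph C_n, and let w, s ∈ ℂ with Re(w) > 2 and Re(s) > 0. Then (1/Γ(w)) · ∫₀^∞ (det(I_{2n} − e^{t}·U_{C_n}))^{−1}·e^{−st}·t^{w−1} dt = Σ_{k₁=0}^{∞} Σ_{k₂=0}^{∞} (s + 2n + (k₁ + k₂)·n)^{−w}. That is, the absolute Hurwitz zeta function of ζ_{U_{C_n}} equals the multiple Hurwitz zeta function of order 2, ζ₂(w, s + 2n, (n, n)). -/
open MeasureTheory Matrix Complex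

/-!
The Grover matrix of `C_n` is the direct sum of the two opposite rotations of the cycle, and the
Leibniz expansion of `det (1 - u σ)` for an `n`-cycle `σ` has only two nonzero terms, those of `1`
and of `σ`; hence `ζ_U(u) = (1 - u ^ n)⁻²`. At `u = e ^ t` this is a double geometric series in
`e ^ (-n t)`, and since the Mellin transform of `e ^ (-r t)` at `w` is `r ^ (-w) Γ(w)`, integrating
termwise gives the double Hurwitz series. The termwise integration needs `Re w > 2`, which makes the
double series absolutely convergent because `(x + k₁ a + k₂ b) ^ 2 ≥ (x + k₁ a) (x + k₂ b)`.
-/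

open Filter Asymptotics
open scoped Topology

section MellinExp

theorem eqOn_re_pos_of_eqOn_ofReal {f g : ℂ → ℂ}
    (hf : DifferentiableOn ℂ f {z | 0 < z.re}) (hg : DifferentiableOn ℂ g {z | 0 < z.re})
    (hfg : ∀ x : ℝ, 0 < x → f x = g x) : Set.EqOn f g {z | 0 < z.re} := by
  have isOpen_re_pos : IsOpen {z : ℂ | 0 < z.re} := isOpen_lt continuous_const continuous_re
  refine AnalyticOnNhd.eqOn_of_preconnected_of_frequently_eq (hf.analyticOnNhd isOpen_re_pos)
    (hg.analyticOnNhd isOpen_re_pos) (convex_halfSpace_re_gt 0).isPreconnected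
    (z₀ := ((1 : ℝ) : ℂ)) (by simp) ?_
  have tendsto_ofReal : Tendsto ((↑) : ℝ → ℂ) (𝓝[≠] 1) (𝓝[≠] ((1 : ℝ) : ℂ)) :=
    continuous_ofReal.continuousWithinAt.tendsto_nhdsWithin
      fun x hx => by simpa using hx
  have eventually_pos : ∀ᶠ x : ℝ in 𝓝[≠] 1, 0 < x :=
    eventually_nhdsWithin_of_eventually_nhds (eventually_gt_nhds one_pos)
  exact tendsto_ofReal.frequently (eventually_pos.mono hfg).frequently

variable {w r : ℂ}

theorem norm_cpow_smul_cexp_neg_mul (w r : ℂ) {t : ℝ} (ht : 0 < t) :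
    ‖(t : ℂ) ^ (w - 1) • cexp (-(r * t))‖ = t ^ (w.re - 1) * Real.exp (-(r.re * t)) := by
  rw [norm_smul, norm_cpow_eq_rpow_re_of_pos ht, norm_exp]
  simp

theorem integral_norm_cpow_smul_cexp_neg_mul (hw : 0 < w.re) (hr : 0 < r.re) :
    ∫ t in Set.Ioi (0 : ℝ), ‖(t : ℂ) ^ (w - 1) • cexp (-(r * t))‖
      = r.re ^ (-w.re) * Real.Gamma w.re := by
  rw [Real.rpow_neg hr.le, ← Real.inv_rpow hr.le, ← one_div,
    ← Real.integral_rpow_mul_exp_neg_mul_Ioi hw hr]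
  exact setIntegral_congr_fun measurableSet_Ioi fun t ht => norm_cpow_smul_cexp_neg_mul w r ht

theorem mellinConvergent_cexp_neg_mul (hw : 0 < w.re) (hr : 0 < r.re) :
    MellinConvergent (fun t : ℝ => cexp (-(r * t))) w := by
  have continuous_exp : Continuous fun t : ℝ => cexp (-(r * t)) := by fun_prop
  refine mellinConvergent_of_isBigO_rpow_exp (b := 0) hr
    (continuous_exp.locallyIntegrable.locallyIntegrableOn _)
    (isBigO_of_le _ fun t => by simp [norm_exp]) ?_ hw
  simpa using continuous_exp.continuousWithinAt.isBigO_one ℝ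

theorem hasDerivAt_mellin_cexp_neg_mul (hw : 0 < w.re) (hr : 0 < r.re) :
    HasDerivAt (fun z => mellin (fun t : ℝ => cexp (-(z * t))) w)
      (-mellin (fun t : ℝ => cexp (-(r * t))) (w + 1)) r := by
  have hw' : 0 < (w + 1).re := by simpa using by linarith
  have half_mem_nhds : {z : ℂ | r.re / 2 < z.re} ∈ 𝓝 r :=
    (isOpen_lt continuous_const continuous_re).mem_nhds (half_lt_self hr)
  have norm_deriv_le : ∀ᵐ t : ℝ ∂volume.restrict (Set.Ioi 0), ∀ z ∈ {z : ℂ | r.re / 2 < z.re},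
      ‖-((t : ℂ) ^ (w + 1 - 1) • cexp (-(z * t)))‖
        ≤ ‖(t : ℂ) ^ (w + 1 - 1) • cexp (-((r.re / 2 : ℝ) * t))‖ := by
    filter_upwards [ae_restrict_mem measurableSet_Ioi] with t (ht : 0 < t) z (hz : r.re / 2 < z.re)
    rw [norm_neg, norm_cpow_smul_cexp_neg_mul _ _ ht, norm_cpow_smul_cexp_neg_mul _ _ ht, ofReal_re]
    gcongr
  have integrand_hasDerivAt : ∀ᵐ t : ℝ ∂volume.restrict (Set.Ioi 0),
      ∀ z ∈ {z : ℂ | r.re / 2 < z.re}, HasDerivAt (fun z => (t : ℂ) ^ (w - 1) • cexp (-(z * t)))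
        (-((t : ℂ) ^ (w + 1 - 1) • cexp (-(z * t)))) z := by
    filter_upwards [ae_restrict_mem measurableSet_Ioi] with t (ht : 0 < t) z _
    have cpow_succ : (t : ℂ) ^ (w + 1 - 1) = (t : ℂ) ^ (w - 1) * t := by
      rw [add_sub_right_comm, cpow_add _ _ (ofReal_ne_zero.2 ht.ne'), cpow_one]
    have exp_hasDerivAt : HasDerivAt (fun z : ℂ => cexp (-(z * t))) (cexp (-(z * t)) * -t) z := by
      simpa using ((hasDerivAt_id z).mul_const (t : ℂ)).neg.cexp
    refine (exp_hasDerivAt.const_mul ((t : ℂ) ^ (w - 1))).congr_deriv ?_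
    rw [cpow_succ, smul_eq_mul]
    ring
  have key := (hasDerivAt_integral_of_dominated_loc_of_deriv_le half_mem_nhds
    (mem_of_superset half_mem_nhds fun z hz => Integrable.aestronglyMeasurable
      (mellinConvergent_cexp_neg_mul hw ((half_pos hr).trans hz)))
    (mellinConvergent_cexp_neg_mul hw hr)
    (Integrable.neg (mellinConvergent_cexp_neg_mul hw' hr)).aestronglyMeasurable
    norm_deriv_le
    (Integrable.norm (mellinConvergent_cexp_neg_mul hw' (by simpa using hr)))
    integrand_hasDerivAt).2
  simpa only [mellin, integral_neg] using key

theorem hasMellin_cexp_neg_mul (hw : 0 < w.re) (hr : 0 < r.re) :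
    HasMellin (fun t : ℝ => cexp (-(r * t))) w (r ^ (-w) * Gamma w) := by
  -- Both sides are holomorphic in `r`, so real rates suffice.
  refine ⟨mellinConvergent_cexp_neg_mul hw hr,
    eqOn_re_pos_of_eqOn_ofReal
      (fun z hz => (hasDerivAt_mellin_cexp_neg_mul hw hz).differentiableAt.differentiableWithinAt)
      (fun z hz => ((differentiableAt_id.cpow_const (Or.inl hz)).mul_const
        _).differentiableWithinAt) (fun x hx => ?_) hr⟩
  have arg_ne_pi : arg (x : ℂ) ≠ Real.pi := by
    rw [arg_ofReal_of_nonneg hx.le]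
    exact Real.pi_pos.ne
  simp only [mellin, smul_eq_mul]
  rw [integral_cpow_mul_exp_neg_mul_Ioi hw hx, one_div, inv_cpow _ _ arg_ne_pi, id, cpow_neg]

theorem hasSum_mellin_cexp_neg_mul {ι : Type*} [Countable ι] {a r : ι → ℂ} {F : ℝ → ℂ}
    (hw : 0 < w.re) (hr : ∀ i, 0 < (r i).re)
    (hF : ∀ t : ℝ, 0 < t → HasSum (fun i => a i * cexp (-(r i * t))) (F t))
    (h_sum : Summable fun i => ‖a i‖ * (r i).re ^ (-w.re)) :
    HasSum (fun i => a i * (r i ^ (-w) * Gamma w)) (mellin F w) := by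
  have mellin_F : mellin F w =
      ∫ t in Set.Ioi (0 : ℝ), ∑' i, (t : ℂ) ^ (w - 1) • (a i * cexp (-(r i * t))) :=
    setIntegral_congr_fun measurableSet_Ioi fun t ht => by
      rw [((hF t ht).const_smul _).tsum_eq]
  have convergent (i : ι) : MellinConvergent (fun t : ℝ => a i * cexp (-(r i * t))) w :=
    (mellinConvergent_cexp_neg_mul hw (hr i)).const_smul (a i)
  have mellin_term (i : ι) :
      mellin (fun t : ℝ => a i * cexp (-(r i * t))) w = a i * (r i ^ (-w) * Gamma w) := by
    rw [← (hasMellin_cexp_neg_mul hw (hr i)).2]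
    exact mellin_const_smul _ w (a i)
  have integral_norm_term (i : ι) :
      ∫ t in Set.Ioi (0 : ℝ), ‖(t : ℂ) ^ (w - 1) • (a i * cexp (-(r i * t)))‖
        = ‖a i‖ * (r i).re ^ (-w.re) * Real.Gamma w.re := by
    simp only [← smul_eq_mul (a i), smul_comm _ (a i)]
    simp only [norm_smul (a i), integral_const_mul]
    rw [integral_norm_cpow_smul_cexp_neg_mul hw (hr i), mul_assoc]
  simp only [mellin_F, ← mellin_term]
  refine hasSum_integral_of_summable_integral_norm convergent ?_
  simpa only [integral_norm_term] using h_sum.mul_right _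

end MellinExp

section CyclicDeterminant

open Equiv

theorem isCycleOn_univ_addRight {G : Type*} [AddGroup G] {g : G}
    (hg : ∀ x, x ∈ AddSubgroup.zmultiples g) : (Equiv.addRight g).IsCycleOn Set.univ := by
  refine ⟨Set.bijOn_univ.2 (Equiv.bijective _), fun x _ y _ => ?_⟩
  obtain ⟨k, hk⟩ := AddSubgroup.mem_zmultiples_iff.1 (hg (-x + y))
  exact ⟨k, by simp [hk]⟩

theorem eq_one_or_eq_of_isCycleOn_univ {α : Type*} [Finite α] {σ τ : Perm α}
    (hσ : σ.IsCycleOn Set.univ) (hτ : ∀ x, τ x = x ∨ τ x = σ x) : τ = 1 ∨ τ = σ := by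
  refine or_iff_not_imp_left.2 fun hne => ?_
  obtain ⟨a, ha⟩ : ∃ a, τ a ≠ a := by simpa [Perm.ext_iff] using hne
  have moves_succ {x : α} (hx : τ x ≠ x) : τ (σ x) ≠ σ x := fun h =>
    hx (((hτ x).resolve_left hx).trans
      (τ.injective (h.trans ((hτ x).resolve_left hx).symm)))
  have moves_pow (k : ℕ) : τ ((σ ^ k) a) ≠ (σ ^ k) a := by
    induction k with
    | zero => simpa using ha
    | succ k ih => simpa only [pow_succ', Perm.mul_apply] using moves_succ ih
  ext x
  obtain ⟨k, rfl⟩ := hσ.exists_pow_eq' Set.finite_univ (Set.mem_univ a) (Set.mem_univ x)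
  exact (hτ _).resolve_left (moves_pow k)

variable {α R : Type*} [Fintype α] [DecidableEq α] [CommRing R] {σ : Perm α}

theorem sign_of_isCycleOn_univ [Nontrivial α] (hσ : σ.IsCycleOn Set.univ) :
    Perm.sign σ = -(-1) ^ Fintype.card α := by
  have apply_ne (x : α) : σ x ≠ x := hσ.apply_ne Set.nontrivial_univ (Set.mem_univ x)
  have support_eq : σ.support = Finset.univ := by ext x; simp [apply_ne x]
  have isCycle : σ.IsCycle := Perm.isCycle_iff_exists_isCycleOn.2
    ⟨Set.univ, Set.nontrivial_univ, hσ, fun x _ => Set.mem_univ x⟩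
  rw [isCycle.sign, support_eq, Finset.card_univ]

theorem det_one_sub_smul_permMatrix_of_isCycleOn_univ [Nonempty α]
    (hσ : σ.IsCycleOn Set.univ) (u : R) :
    (1 - u • σ.permMatrix R).det = 1 - u ^ Fintype.card α := by
  obtain ⟨a⟩ := ‹Nonempty α›
  rcases subsingleton_or_nontrivial α with _ | _
  · have card_eq_one : Fintype.card α = 1 := Fintype.card_eq_one_iff.2 ⟨a, (Subsingleton.elim · a)⟩
    simp [det_eq_elem_of_subsingleton _ a, Subsingleton.elim σ 1, card_eq_one]
  set M : Matrix α α R := 1 - u • σ.permMatrix R with hM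
  have apply_ne (x : α) : σ x ≠ x := hσ.apply_ne Set.nontrivial_univ (Set.mem_univ x)
  have one_ne : 1 ≠ σ := fun h => apply_ne a (by simp [← h])
  have term_eq_zero (τ : Perm α) (hτ : τ ≠ 1 ∧ τ ≠ σ) :
      (Perm.sign τ : R) * ∏ i, M i (τ i) = 0 := by
    obtain ⟨i, hi_one, hi_σ⟩ : ∃ i, τ i ≠ i ∧ τ i ≠ σ i := by
      by_contra! h
      exact not_or.2 hτ (eq_one_or_eq_of_isCycleOn_univ hσ fun x => or_iff_not_imp_left.2 (h x))
    have entry_eq_zero : M i (τ i) = 0 := by simp [hM, hi_one.symm, hi_σ.symm]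
    rw [Finset.prod_eq_zero (Finset.mem_univ i) entry_eq_zero, mul_zero]
  have prod_one : ∏ i, M i ((1 : Perm α) i) = 1 := by simp [hM, apply_ne]
  have prod_cycle : ∏ i, M i (σ i) = (-u) ^ Fintype.card α := by
    simp [hM, (apply_ne _).symm]
  calc M.det = ∑ τ : Perm α, (Perm.sign τ : R) * ∏ i, M i (τ i) := by
        rw [← det_transpose, det_apply']; rfl
    _ = 1 + -(-1) ^ Fintype.card α * (-u) ^ Fintype.card α := by
        rw [Fintype.sum_eq_add 1 σ one_ne term_eq_zero, prod_one, prod_cycle,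
          sign_of_isCycleOn_univ hσ]
        simp
    _ = 1 - u ^ Fintype.card α := by
        rw [neg_mul, ← mul_pow, neg_one_mul, neg_neg, sub_eq_add_neg]

end CyclicDeterminant

/-- The Grover matrix `U_{C_n}` of the cycle graph. The index `(i, a)` is the `a`-th coordinate of
the block of the vertex `i`: coordinate `0` carries the blocks `P`, coordinate `1` the blocks
`Q`. -/
def cycleGroverMatrix (R : Type*) [Zero R] [One R] (n : ℕ) :
    Matrix (ZMod n × Fin 2) (ZMod n × Fin 2) R :=
  of fun x y =>
    if y.1 = x.1 + 1 ∧ x.2 = 0 ∧ y.2 = 0 then 1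
    else if y.1 = x.1 - 1 ∧ x.2 = 1 ∧ y.2 = 1 then 1 else 0

theorem cycleGroverMatrix_eq_blockDiagonal (R : Type*) [Zero R] [One R] (n : ℕ) :
    cycleGroverMatrix R n =
      blockDiagonal ![(Equiv.addRight 1).permMatrix R, (Equiv.addRight (-1)).permMatrix R] := by
  ext ⟨i, a⟩ ⟨j, b⟩
  fin_cases a <;> fin_cases b <;>
    simp [cycleGroverMatrix, blockDiagonal_apply, PEquiv.toMatrix_apply, sub_eq_add_neg, eq_comm]

theorem det_one_sub_smul_cycleGroverMatrix {R : Type*} [CommRing R] (n : ℕ) [NeZero n] (u : R) :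
    (1 - u • cycleGroverMatrix R n).det = (1 - u ^ n) ^ 2 := by
  have one_generates (x : ZMod n) : x ∈ AddSubgroup.zmultiples (1 : ZMod n) :=
    AddSubgroup.mem_zmultiples_iff.2 ⟨x.cast, by simp⟩
  have det_block {g : ZMod n} (hg : ∀ x, x ∈ AddSubgroup.zmultiples g) :
      (1 - u • (Equiv.addRight g).permMatrix R).det = 1 - u ^ n := by
    rw [det_one_sub_smul_permMatrix_of_isCycleOn_univ (isCycleOn_univ_addRight hg), ZMod.card]
  rw [cycleGroverMatrix_eq_blockDiagonal, ← blockDiagonal_one, ← blockDiagonal_smul,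
    ← blockDiagonal_sub, det_blockDiagonal, Fin.prod_univ_two, sq]
  exact congrArg₂ _ (det_block one_generates)
    (det_block fun x => by simpa using one_generates x)

section HurwitzZeta

/-- The absolute Hurwitz zeta function `Z_f(w, s)` of `f`. As `f` is only evaluated at the points
`e ^ t` with `0 < t`, its values off `(1, ∞)` do not matter. -/
noncomputable def absoluteHurwitzZeta (f : ℂ → ℂ) (w s : ℂ) : ℂ :=
  (1 / Gamma w) * ∫ t in Set.Ioi (0 : ℝ), f (Real.exp t) * cexp (-(s * t)) * (t : ℂ) ^ (w - 1)

/-- The multiple Hurwitz zeta function of order 2, `ζ₂(w, x, (ω₁, ω₂))`. Beware that the sum has the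
junk value `0` where it does not converge absolutely. -/
noncomputable def doubleHurwitzZeta (w x ω₁ ω₂ : ℂ) : ℂ :=
  ∑' k : ℕ × ℕ, (x + (k.1 * ω₁ + k.2 * ω₂)) ^ (-w)

theorem absoluteHurwitzZeta_eq_mellin (f : ℂ → ℂ) (w s : ℂ) :
    absoluteHurwitzZeta f w s =
      (1 / Gamma w) * mellin (fun t => f (Real.exp t) * cexp (-(s * t))) w := by
  simp only [absoluteHurwitzZeta, mellin, smul_eq_mul, mul_comm]

theorem summable_arithmetic_rpow_neg {a x τ : ℝ} (ha : 0 < a) (hx : 0 < x) (hτ : 1 < τ) :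
    Summable fun k : ℕ => (x + k * a) ^ (-τ) := by
  refine (((Real.summable_one_div_nat_add_rpow (x / a) τ).2 hτ).mul_left (a ^ (-τ))).congr
    fun k => ?_
  have shift_nonneg : 0 ≤ k + x / a := by positivity
  rw [abs_of_nonneg shift_nonneg, one_div, ← Real.rpow_neg shift_nonneg,
    ← Real.mul_rpow ha.le shift_nonneg]
  congr 1
  field_simp
  ring

theorem summable_double_arithmetic_rpow_neg {a b x σ : ℝ} (ha : 0 < a) (hb : 0 < b) (hx : 0 < x)
    (hσ : 2 < σ) : Summable fun k : ℕ × ℕ => (x + (k.1 * a + k.2 * b)) ^ (-σ) := by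
  have one_lt_half : 1 < σ / 2 := by linarith
  refine ((summable_arithmetic_rpow_neg ha hx one_lt_half).mul_of_nonneg
    (summable_arithmetic_rpow_neg hb hx one_lt_half) (fun _ => by positivity)
    (fun _ => by positivity)).of_nonneg_of_le (fun k => by positivity) fun k => ?_
  calc (x + (k.1 * a + k.2 * b)) ^ (-σ)
      = (x + (k.1 * a + k.2 * b)) ^ (-(σ / 2)) * (x + (k.1 * a + k.2 * b)) ^ (-(σ / 2)) := by
        rw [← Real.rpow_add (by positivity)]
        ring_nf
    _ ≤ (x + k.1 * a) ^ (-(σ / 2)) * (x + k.2 * b) ^ (-(σ / 2)) := by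
        gcongr ?_ * ?_ <;>
          refine Real.rpow_le_rpow_of_nonpos (by positivity) ?_ (by linarith) <;>
          gcongr
        · exact le_add_of_nonneg_right (by positivity)
        · exact le_add_of_nonneg_left (by positivity)

theorem hasSum_cexp_neg_succ_mul {z : ℂ} (hz : 0 < z.re) :
    HasSum (fun k : ℕ => cexp (-((k + 1) * z))) (cexp z - 1)⁻¹ := by
  have norm_lt_one : ‖cexp (-z)‖ < 1 := by simpa [norm_exp] using hz
  have sum_eq : cexp (-z) * (1 - cexp (-z))⁻¹ = (cexp z - 1)⁻¹ := by
    rw [exp_neg, ← mul_inv, mul_sub, mul_one, mul_inv_cancel₀ (exp_ne_zero z)]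
  rw [← sum_eq]
  refine ((hasSum_geometric_of_norm_lt_one norm_lt_one).mul_left (cexp (-z))).congr_fun
    fun k => ?_
  rw [← exp_nat_mul, ← exp_add]
  ring_nf

theorem hasSum_mul_prod {ι κ A : Type*} [NormedRing A] [NormedSpace ℝ A] [FiniteDimensional ℝ A]
    {f : ι → A} {g : κ → A} {a b : A} (hf : HasSum f a) (hg : HasSum g b) :
    HasSum (fun k : ι × κ => f k.1 * g k.2) (a * b) :=
  have : CompleteSpace A := FiniteDimensional.complete ℝ A
  hf.mul hg (summable_mul_of_summable_norm hf.summable.norm hg.summable.norm)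

theorem hasSum_cexp_neg_mul_double {ω₁ ω₂ : ℂ} (hω₁ : 0 < ω₁.re) (hω₂ : 0 < ω₂.re) (s : ℂ) {t : ℝ}
    (ht : 0 < t) :
    HasSum (fun k : ℕ × ℕ => cexp (-((s + ω₁ + ω₂ + (k.1 * ω₁ + k.2 * ω₂)) * t)))
      (((1 - (Real.exp t : ℂ) ^ ω₁) * (1 - (Real.exp t : ℂ) ^ ω₂))⁻¹ * cexp (-(s * t))) := by
  have exp_cpow (ω : ℂ) : (Real.exp t : ℂ) ^ ω = cexp (ω * t) := by
    rw [cpow_def_of_ne_zero (ofReal_ne_zero.2 (Real.exp_ne_zero t)),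
      ← ofReal_log (Real.exp_nonneg t), Real.log_exp, mul_comm]
  have factor_hasSum {ω : ℂ} (hω : 0 < ω.re) :
      HasSum (fun k : ℕ => cexp (-((k + 1) * (ω * t)))) (cexp (ω * t) - 1)⁻¹ :=
    hasSum_cexp_neg_succ_mul (by simpa using mul_pos hω ht)
  have term_eq (k : ℕ × ℕ) : cexp (-((s + ω₁ + ω₂ + (k.1 * ω₁ + k.2 * ω₂)) * t)) =
      cexp (-((k.1 + 1) * (ω₁ * t))) * cexp (-((k.2 + 1) * (ω₂ * t))) * cexp (-(s * t)) := by
    rw [← exp_add, ← exp_add]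
    ring_nf
  simp only [term_eq]
  rw [exp_cpow, exp_cpow, ← neg_sub, ← neg_sub (cexp (ω₂ * t)), neg_mul_neg, mul_inv]
  exact (hasSum_mul_prod (factor_hasSum hω₁) (factor_hasSum hω₂)).mul_right _

theorem absoluteHurwitzZeta_inv_mul {ω₁ ω₂ w s : ℂ} (hω₁ : 0 < ω₁.re) (hω₂ : 0 < ω₂.re)
    (hw : 2 < w.re) (hs : 0 < (s + ω₁ + ω₂).re) :
    absoluteHurwitzZeta (fun u => ((1 - u ^ ω₁) * (1 - u ^ ω₂))⁻¹) w s =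
      doubleHurwitzZeta w (s + ω₁ + ω₂) ω₁ ω₂ := by
  have hw₀ : 0 < w.re := by linarith
  have re_frequency (k : ℕ × ℕ) : (s + ω₁ + ω₂ + (k.1 * ω₁ + k.2 * ω₂)).re =
      (s + ω₁ + ω₂).re + (k.1 * ω₁.re + k.2 * ω₂.re) := by simp
  have zeta_hasSum := hasSum_mellin_cexp_neg_mul (a := fun _ => 1) hw₀
    (fun k => by rw [re_frequency]; positivity)
    (fun t ht => by simpa only [one_mul] using hasSum_cexp_neg_mul_double hω₁ hω₂ s ht)
    (by simpa only [re_frequency, norm_one, one_mul] using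
      summable_double_arithmetic_rpow_neg hω₁ hω₂ hs hw)
  rw [absoluteHurwitzZeta_eq_mellin, ← zeta_hasSum.tsum_eq]
  simp only [one_mul, tsum_mul_right, doubleHurwitzZeta]
  field_simp [Gamma_ne_zero_of_re_pos hw₀]

end HurwitzZeta

/-- The zeta function `ζ_U(u)` of a square matrix `U`, which takes the junk value `0` at its
poles. -/
noncomputable def matrixZeta {ι K : Type*} [Fintype ι] [DecidableEq ι] [Field K]
    (U : Matrix ι ι K) (u : K) : K :=
  (1 - u • U).det⁻¹

theorem absolute_hurwitz_zeta_cycle_grover_general (n : ℕ) [NeZero n] (w s : ℂ) (hw : 2 < w.re)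
    (hs : -(2 * n) < s.re) :
    absoluteHurwitzZeta (matrixZeta (cycleGroverMatrix ℂ n)) w s =
      doubleHurwitzZeta w (s + 2 * n) n n := by
  have n_re_pos : 0 < (n : ℂ).re := by simpa using Nat.pos_of_neZero n
  have zeta_eq : matrixZeta (cycleGroverMatrix ℂ n) =
      fun u => ((1 - u ^ (n : ℂ)) * (1 - u ^ (n : ℂ)))⁻¹ := by
    ext u
    rw [matrixZeta, det_one_sub_smul_cycleGroverMatrix, cpow_natCast, sq]
  have shift_eq : s + 2 * n = s + n + n := by ring
  rw [zeta_eq, shift_eq]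
  exact absoluteHurwitzZeta_inv_mul n_re_pos n_re_pos hw (by simp only [add_re, natCast_re]; linarith)

/-- For `n ≥ 3` and the Grover matrix `U` of the cycle graph `C_n`
(the `2n × 2n` matrix with `2 × 2` blocks `P = [[1,0],[0,0]]` at position `(i, i+1)`,
`Q = [[0,0],[0,1]]` at position `(i, i-1)`, and `0` elsewhere), for `w, s : ℂ` with
`Re w > 2` and `Re s > 0`, the absolute Hurwitz zeta function of
`ζ_U(u) = det(I_{2n} - u • U)⁻¹` equals `ζ₂(w, s + 2n, (n, n))`:
`(1/Γ(w)) ∫₀^∞ det(I_{2n} - e^t • U)⁻¹ e^{-st} t^{w-1} dt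
  = Σ_{k₁,k₂ ≥ 0} (s + 2n + (k₁+k₂)n)^{-w}`. -/
theorem absolute_hurwitz_zeta_cycle_grover (n : ℕ) [NeZero n] (hn : 3 ≤ n)
    (U : Matrix (ZMod n × Fin 2) (ZMod n × Fin 2) ℂ)
    (hU : ∀ (i j : ZMod n) (a b : Fin 2),
      U (i, a) (j, b) =
        if j = i + 1 ∧ a = 0 ∧ b = 0 then 1
        else if j = i - 1 ∧ a = 1 ∧ b = 1 then 1 else 0)
    (w s : ℂ) (hw : 2 < w.re) (hs : 0 < s.re) :
    (1 / Complex.Gamma w) *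
        ∫ t in Set.Ioi (0 : ℝ),
          (((1 : Matrix (ZMod n × Fin 2) (ZMod n × Fin 2) ℂ)
              - (Real.exp t : ℂ) • U).det)⁻¹ *
            Complex.exp (-(s * t)) * (t : ℂ) ^ (w - 1)
      = ∑' p : ℕ × ℕ, (s + 2 * n + (p.1 + p.2) * n) ^ (-w) := by
  obtain rfl : U = cycleGroverMatrix ℂ n := by ext ⟨i, a⟩ ⟨j, b⟩; exact hU i j a b
  simpa only [doubleHurwitzZeta, ← add_mul] using!
    absolute_hurwitz_zeta_cycle_grover_general n w s hw (by linarith [n.cast_nonneg (α := ℝ)])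
end
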